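/- arXiv:1312.5401 — 2 statements merged into one kernel-verified Lean document; each statement's English description precedes it below -/
import Mathlib

section
/- Let M_1 and M_2 be matroids on the same ground set, and assume that (e_1, e_2, e_3, e_4) is a fan with e_1 as a spoke element in both M_1 and M_2. If M_1 \ e_1 = M_2 \ e_1, then M_1 = M_2. -/
/-!
A matroid is determined by the deletion of `e` and the sets avoiding `e` that span `e`, so it is
enough to express `e ∈ cl X`, for a triangle `{e, f, g}` and a triad `{f, g, h}`, through closures
that only involve other elements. If `f ∈ X`, then the triangle shows that `X` spans `e` if and only
if it spans `g`, and symmetrically if `g ∈ X`. If `X` contains neither, put `Y = X \ {h}`. Since the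
complement of the triad is a flat containing `Y ∪ {e}`, a single element of the triad can be added
to `Y` or removed again without affecting whether `e` is spanned. Exchanging `h` for `f` in this
way shows that `X` spans `e` if and only if `Y ∪ {f}` does, which the triangle reduces to
`g ∈ cl (Y ∪ {f})`.
-/

open Matroid Set

universe u

variable {α : Type u}

namespace PaperDefs

/-- Deletion of a set of elements from a matroid. -/
def mdel (M : Matroid α) (D : Set α) : Matroid α := M ↾ (M.E \ D)

/-- Contraction of a set of elements in a matroid. -/
def mcon (M : Matroid α) (C : Set α) : Matroid α := (mdel M✶ C)✶

/-- A circuit: a minimal dependent set. -/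
def IsCircuit (M : Matroid α) (C : Set α) : Prop :=
  M.Dep C ∧ ∀ X, X ⊂ C → M.Indep X

/-- A triangle: a 3-element circuit. -/
def IsTriangle (M : Matroid α) (T : Set α) : Prop :=
  IsCircuit M T ∧ T.encard = 3

/-- A triad: a 3-element cocircuit. -/
def IsTriad (M : Matroid α) (T : Set α) : Prop := IsTriangle M✶ T

/-- The (extended natural number) rank of a set in a matroid: the supremum of the
cardinalities of its independent subsets. -/
noncomputable def erk (M : Matroid α) (X : Set α) : ℕ∞ :=
  ⨆ I ∈ {I : Set α | M.Indep I ∧ I ⊆ X}, I.encard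

/-- Two elements are connected if they are equal or lie in a common circuit. -/
def ConnTo (M : Matroid α) (e f : α) : Prop :=
  (e = f ∧ e ∈ M.E) ∨ ∃ C, IsCircuit M C ∧ e ∈ C ∧ f ∈ C

/-- A matroid is connected if its ground set is nonempty and every two of its elements
are connected. -/
def Conn (M : Matroid α) : Prop :=
  M.E.Nonempty ∧ ∀ e ∈ M.E, ∀ f ∈ M.E, ConnTo M e f

/-- A 2-separation of a matroid: a partition `(X, Y)` of the ground set with both sides
of size at least two and `r(X) + r(Y) - r(M) ≤ 1`. -/
def TwoSep (M : Matroid α) (X Y : Set α) : Prop :=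
  X ∪ Y = M.E ∧ Disjoint X Y ∧ 2 ≤ X.encard ∧ 2 ≤ Y.encard ∧
    erk M X + erk M Y ≤ erk M M.E + 1

/-- A matroid is 3-connected if it is connected and has no 2-separation. -/
def ThreeConn (M : Matroid α) : Prop :=
  Conn M ∧ ∀ X Y, ¬ TwoSep M X Y

/-- A matroid is 3-connected up to series and parallel sets if it is connected and, for
every 2-separation `(X, Y)`, `min {r X, r Y} = 1` or `min {r✶ X, r✶ Y} = 1`. -/
def ThreeConnUpToSP (M : Matroid α) : Prop :=
  Conn M ∧ ∀ X Y, TwoSep M X Y →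
    min (erk M X) (erk M Y) = 1 ∨ min (erk M✶ X) (erk M✶ Y) = 1

/-- `N` is a minor of `M`: it is obtained from `M` by contracting a set `C` and deleting
a disjoint set `D`. -/
def IsMinor (N M : Matroid α) : Prop :=
  ∃ C D, C ⊆ M.E ∧ D ⊆ M.E ∧ Disjoint C D ∧ N = mdel (mcon M C) D

/-- `M` is isomorphic to `N`: there is a bijection between the ground sets under which
independence corresponds. -/
def IsoTo (M N : Matroid α) : Prop :=
  ∃ f : α → α, Set.BijOn f M.E N.E ∧ ∀ I, I ⊆ M.E → (M.Indep I ↔ N.Indep (f '' I))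

/-- The cyclic interval `{i, i+1, ..., j-1}` in `ZMod r`. -/
def cycArc (r : ℕ) (i j : ZMod r) : Set (ZMod r) :=
  {k | ∃ m : ℕ, m < (j - i).val ∧ k = i + (m : ZMod r)}

/-- `M` is (isomorphic to) a rank-`r` wheel for some `r ≥ 2`, i.e. the cycle matroid of
the wheel graph with `r` spokes: there is a labelling of the ground set by spokes `s i`
and rim elements `w i` so that the circuits of `M` are precisely the rim together with
the sets consisting of two spokes and the rim elements of one of the two arcs joining
them. -/
def IsWheel (M : Matroid α) : Prop :=
  ∃ r : ℕ, 2 ≤ r ∧ ∃ s w : ZMod r → α,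
    Function.Injective (Sum.elim s w) ∧
    M.E = Set.range s ∪ Set.range w ∧
    ∀ C, IsCircuit M C ↔
      (C = Set.range w ∨
        ∃ i j : ZMod r, i ≠ j ∧ C = {s i, s j} ∪ w '' cycArc r i j)

/-- `M` is (isomorphic to) a rank-`r` whirl for some `r ≥ 2`: obtained from the rank-`r`
wheel by relaxing the rim circuit; its circuits are the two-spokes-plus-arc circuits of
the wheel together with the sets consisting of the whole rim and a single spoke. -/
def IsWhirl (M : Matroid α) : Prop :=
  ∃ r : ℕ, 2 ≤ r ∧ ∃ s w : ZMod r → α,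
    Function.Injective (Sum.elim s w) ∧
    M.E = Set.range s ∪ Set.range w ∧
    ∀ C, IsCircuit M C ↔
      ((∃ i : ZMod r, C = insert (s i) (Set.range w)) ∨
        ∃ i j : ZMod r, i ≠ j ∧ C = {s i, s j} ∪ w '' cycArc r i j)

/-- A triangle if `b = true`, a triad if `b = false`. -/
def TriOrTriad (M : Matroid α) (b : Bool) (T : Set α) : Prop :=
  cond b (IsTriangle M T) (IsTriad M T)

/-- The alternation pattern of a fan, recorded as a list: position `i` (zero-based)
carries a spoke element iff `fanBool b i = true`, where `b` records whether the first
triple of the fan is a triangle. -/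
def fanBool (b : Bool) (i : ℕ) : Bool := if i % 2 = 0 then b else !b

/-- `F` is a fan of `M` whose first triple is a triangle if `b = true` (so that the
first element is a spoke element) and a triad if `b = false`: a list of at least three
distinct elements of the ground set in which every three consecutive elements form
alternately triangles and triads. -/
def IsFanWith (M : Matroid α) (b : Bool) (F : List α) : Prop :=
  3 ≤ F.length ∧ F.Nodup ∧ (∀ x ∈ F, x ∈ M.E) ∧
  ∀ (l₁ : List α) (x y z : α) (l₂ : List α), F = l₁ ++ x :: y :: z :: l₂ →
    TriOrTriad M (fanBool b l₁.length) {x, y, z}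

/-- `F` is a fan of `M`. -/
def IsFan (M : Matroid α) (F : List α) : Prop := ∃ b, IsFanWith M b F

/-- `F` is consistent with `F'`: `F` is a (not necessarily contiguous) subsequence of
`F'` or of its reversal. -/
def Consistent (F F' : List α) : Prop := F.Sublist F' ∨ F.Sublist F'.reverse

/-- A finite family of lists is pairwise disjoint. -/
def PairwiseDisjointLists (𝓕 : Finset (List α)) : Prop :=
  ∀ F ∈ 𝓕, ∀ G ∈ 𝓕, F ≠ G → ∀ x ∈ F, x ∉ G

/-- `𝓕` is a covering family of `M'` relative to `N` and `FN`: a family of pairwise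
disjoint fans of `M'`, of the same size as `FN`, such that every fan of `FN` is
consistent with a member of `𝓕` and every element of `E(M') - E(N)` lies in a member
of `𝓕`. -/
def CoveringFamily (N : Matroid α) (FN : Finset (List α)) (M' : Matroid α)
    (𝓕 : Finset (List α)) : Prop :=
  (∀ F ∈ 𝓕, IsFan M' F) ∧ PairwiseDisjointLists 𝓕 ∧ 𝓕.card = FN.card ∧
  (∀ F ∈ FN, ∃ F' ∈ 𝓕, Consistent F F') ∧
  (∀ x ∈ M'.E \ N.E, ∃ F ∈ 𝓕, x ∈ F)

/-- `M` is obtained from `M'` by a fan-lengthening move on the fan `F₀` of `M'`,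
producing the fan `F` of `M`: either `M' = M \ e₁` where `e₁` is a terminal spoke
element of `F`, or `M' = M / e₁` where `e₁` is a terminal rim element of `F`, or
(when `F` has at least five elements) `M' = M / eᵢ \ eᵢ₊₁` for a rim element `eᵢ`
of `F` with `1 ≤ i ≤ n - 1`; in each case `M` and `M'` are 3-connected and `F₀` is
the corresponding shortened fan. -/
def FanLengthen (M' M : Matroid α) (F₀ F : List α) : Prop :=
  ThreeConn M ∧ 4 ≤ F.length ∧ IsFan M' F₀ ∧
  ∃ b, IsFanWith M b F ∧
    ((∃ e F', F = e :: F' ∧ b = true ∧ M' = mdel M {e} ∧ ThreeConn M' ∧ F₀ = F') ∨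
     (∃ e F', F = e :: F' ∧ b = false ∧ M' = mcon M {e} ∧ ThreeConn M' ∧ F₀ = F') ∨
     (5 ≤ F.length ∧ ∃ (l₁ : List α) (x y : α) (l₂ : List α),
        F = l₁ ++ x :: y :: l₂ ∧ fanBool b l₁.length = false ∧
        M' = mdel (mcon M {x}) {y} ∧ ThreeConn M' ∧ F₀ = l₁ ++ l₂))

/-- The fan-extensions of `N` relative to the family `FN` of fans of `N`: the smallest
collection of matroids containing `N` and closed under fan-lengthening moves performed
on fans belonging to covering families. -/
inductive FanExt (N : Matroid α) (FN : Finset (List α)) : Matroid α → Prop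
  | base : FanExt N FN N
  | step (M' M : Matroid α) (𝓕 : Finset (List α)) (F₀ F : List α) :
      FanExt N FN M' → CoveringFamily N FN M' 𝓕 → F₀ ∈ 𝓕 →
      FanLengthen M' M F₀ F → FanExt N FN M

/-- The covering family `𝓕` of `M` admits a fan-shortening move: there are a matroid
`M'` having `N` as a minor and a fan `F₀` of `M'` such that `M` is obtained from `M'`
by a fan-lengthening move on `F₀` producing a fan that belongs to `𝓕`. -/
def AdmitsFanShortening (N M : Matroid α) (𝓕 : Finset (List α)) : Prop :=
  ∃ (M' : Matroid α) (F₀ F : List α), IsMinor N M' ∧ F ∈ 𝓕 ∧ FanLengthen M' M F₀ F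

/-- The alternation pattern of a fan presented as a function with one-based indices:
position `i` carries a spoke element iff `posBool b i = true`, where `b` records
whether the first triple of the fan is a triangle. -/
def posBool (b : Bool) (i : ℕ) : Bool := if i % 2 = 1 then b else !b

/-- `(e 1, ..., e n)` is a fan of `M` whose first triple is a triangle if `b = true`
(so that `e 1` is a spoke element) and a triad if `b = false`: at least three distinct
elements of the ground set in which every three consecutive elements form alternately
triangles and triads. -/
def IsFanFun (M : Matroid α) (b : Bool) (n : ℕ) (e : ℕ → α) : Prop :=
  3 ≤ n ∧ (∀ i j, 1 ≤ i → i ≤ n → 1 ≤ j → j ≤ n → e i = e j → i = j) ∧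
  (∀ i, 1 ≤ i → i ≤ n → e i ∈ M.E) ∧
  ∀ i, 1 ≤ i → i + 2 ≤ n → TriOrTriad M (posBool b i) {e i, e (i+1), e (i+2)}

/-- The set of elements of the fan `(e 1, ..., e n)`. -/
def fanSet (n : ℕ) (e : ℕ → α) : Set α := {a | ∃ i, 1 ≤ i ∧ i ≤ n ∧ a = e i}

/-- The set of rim elements of the fan `(e 1, ..., e n)` with alternation pattern `b`. -/
def rimSet (b : Bool) (n : ℕ) (e : ℕ → α) : Set α :=
  {a | ∃ i, 1 ≤ i ∧ i ≤ n ∧ posBool b i = false ∧ a = e i}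

/-- `M` is representable over the field `𝔽`. -/
def RepOver (M : Matroid α) (𝔽 : Type*) [Field 𝔽] : Prop :=
  ∃ f : α → (α → 𝔽),
    ∀ I : Set α, I ⊆ M.E → (M.Indep I ↔ LinearIndependent 𝔽 (fun x : I => f (x : α)))

/-- `M` has a minor isomorphic to a member of `𝓢`. -/
def HasSMinor (𝓢 : Set (Matroid α)) (M : Matroid α) : Prop :=
  ∃ S ∈ 𝓢, ∃ N, IsMinor N M ∧ IsoTo N S

/-- `M` is `𝓢`-fragile: for every element `e` of `M`, at least one of `M \ e` and
`M / e` has no `𝓢`-minor. -/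
def SFragile (𝓢 : Set (Matroid α)) (M : Matroid α) : Prop :=
  ∀ e ∈ M.E, ¬ HasSMinor 𝓢 (mdel M {e}) ∨ ¬ HasSMinor 𝓢 (mcon M {e})

end PaperDefs

open PaperDefs

section Closure

variable {M M₁ M₂ : Matroid α} {C K X Y : Set α} {a b e f g h k : α}

lemma mem_closure_of_isCircuit (hC : M.IsCircuit C) (ha : a ∈ C)
    (hCX : C ⊆ insert a (M.closure X)) : a ∈ M.closure X :=
  M.closure_subset_closure_of_subset_closure (sdiff_singleton_subset_iff.2 hCX)
    (hC.mem_closure_sdiff_singleton_of_mem ha)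

lemma mem_closure_iff_mem_closure_of_isCircuit (hC : M.IsCircuit C) (ha : a ∈ C) (hb : b ∈ C)
    (hCX : C ⊆ {a, b} ∪ X) : a ∈ M.closure X ↔ b ∈ M.closure X := by
  have hsub : C ⊆ {a, b} ∪ M.closure X := fun x hx ↦
    (hCX hx).imp_right fun hxX ↦ M.mem_closure_of_mem' hxX (hC.subset_ground hx)
  constructor <;> intro hcl
  · exact mem_closure_of_isCircuit hC hb (by grind)
  · exact mem_closure_of_isCircuit hC ha (by grind)

lemma disjoint_closure_of_isCocircuit (hK : M.IsCocircuit K) (hYK : Disjoint Y K) :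
    Disjoint (M.closure Y) K := by
  refine disjoint_left.2 fun x hxcl hxK ↦ ?_
  obtain ⟨C, hCY, hC, hxC⟩ :=
    exists_isCircuit_of_mem_closure hxcl (hYK.notMem_of_mem_right hxK)
  refine hC.inter_isCocircuit_ne_singleton hK (e := x) (Subset.antisymm ?_ (by simp [hxC, hxK]))
  rintro y ⟨hyC, hyK⟩
  exact (hCY hyC).resolve_right (hYK.notMem_of_mem_right hyK)

lemma mem_closure_insert_iff_of_isCocircuit (hK : M.IsCocircuit K) (hYK : Disjoint Y K)
    (hk : k ∈ K) (he : e ∉ K) : e ∈ M.closure (insert k Y) ↔ e ∈ M.closure Y := by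
  refine ⟨fun hcl ↦ ?_, fun hcl ↦ M.closure_subset_closure (subset_insert k Y) hcl⟩
  by_contra hecl
  have hkcl : k ∈ M.closure (insert e Y) := mem_closure_insert hecl hcl
  have heYK : Disjoint (insert e Y) K := disjoint_insert_left.2 ⟨he, hYK⟩
  exact (disjoint_closure_of_isCocircuit hK heYK).notMem_of_mem_left hkcl hk

lemma mem_closure_iff_of_triangle_of_triad (hT : M.IsCircuit {e, f, g})
    (hK : M.IsCocircuit {f, g, h}) (he : e ∉ ({f, g, h} : Set α)) (hf : f ∉ X) (hg : g ∉ X) :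
    e ∈ M.closure X ↔ g ∈ M.closure (insert f (X \ {h})) := by
  have hdisj : Disjoint (X \ {h}) {f, g, h} := by
    simp [hf, hg]
  have hremove : e ∈ M.closure X ↔ e ∈ M.closure (X \ {h}) := by
    by_cases hX : h ∈ X
    · rw [← mem_closure_insert_iff_of_isCocircuit hK hdisj (k := h) (by simp) he,
        insert_sdiff_self_of_mem hX]
    · rw [sdiff_singleton_eq_self hX]
  calc e ∈ M.closure X
    _ ↔ e ∈ M.closure (X \ {h}) := hremove
    _ ↔ e ∈ M.closure (insert f (X \ {h})) :=
      (mem_closure_insert_iff_of_isCocircuit hK hdisj (by simp) he).symm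
    _ ↔ g ∈ M.closure (insert f (X \ {h})) :=
      mem_closure_iff_mem_closure_of_isCircuit hT (by simp) (by simp) (by grind)

lemma mem_closure_iff_of_delete_eq {D : Set α} (hdel : M₁ ＼ D = M₂ ＼ D) (hX : Disjoint X D)
    (ha : a ∉ D) : a ∈ M₁.closure X ↔ a ∈ M₂.closure X := by
  rw [← and_iff_left (a := a ∈ M₁.closure X) ha, ← mem_sdiff, ← delete_closure_eq_of_disjoint M₁ hX,
    hdel, delete_closure_eq_of_disjoint M₂ hX, mem_sdiff, and_iff_left ha]

lemma eq_of_delete_singleton_eq (hE : M₁.E = M₂.E) (hdel : M₁ ＼ {e} = M₂ ＼ {e})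
    (hcl : ∀ X, e ∉ X → (e ∈ M₁.closure X ↔ e ∈ M₂.closure X)) : M₁ = M₂ := by
  have hindep {I : Set α} (heI : e ∉ I) : M₁.Indep I ↔ M₂.Indep I := by
    rw [← and_iff_left (a := M₁.Indep I) heI, ← deleteElem_indep_iff, hdel, deleteElem_indep_iff,
      and_iff_left heI]
  refine ext_indep hE fun I _ ↦ ?_
  by_cases heI : e ∈ I
  · have heJ : e ∉ I \ {e} := fun h ↦ h.2 rfl
    have hspan : e ∈ M₁.E \ M₁.closure (I \ {e}) ↔ e ∈ M₂.E \ M₂.closure (I \ {e}) := by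
      rw [mem_sdiff, mem_sdiff, hE, hcl _ heJ]
    rw [← insert_sdiff_self_of_mem heI, insert_indep_iff, insert_indep_iff, hindep heJ, hspan]
  · exact hindep heI

theorem eq_of_delete_eq_of_triangle_of_triad (hE : M₁.E = M₂.E)
    (hT₁ : M₁.IsCircuit {e, f, g}) (hT₂ : M₂.IsCircuit {e, f, g})
    (hK₁ : M₁.IsCocircuit {f, g, h}) (hK₂ : M₂.IsCocircuit {f, g, h})
    (he : e ∉ ({f, g, h} : Set α)) (hdel : M₁ ＼ {e} = M₂ ＼ {e}) : M₁ = M₂ := by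
  obtain ⟨hef, heg, -⟩ : e ≠ f ∧ e ≠ g ∧ e ≠ h := by simpa using he
  refine eq_of_delete_singleton_eq hE hdel fun X heX ↦ ?_
  have hagree {a : α} {Z : Set α} (ha : e ≠ a) (heZ : e ∉ Z) :
      a ∈ M₁.closure Z ↔ a ∈ M₂.closure Z :=
    mem_closure_iff_of_delete_eq hdel (disjoint_singleton_right.2 heZ) ha.symm
  have hswap {a : α} (ha : a ∈ ({e, f, g} : Set α)) (hea : e ≠ a)
      (hTX : {e, f, g} ⊆ {e, a} ∪ X) : e ∈ M₁.closure X ↔ e ∈ M₂.closure X := by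
    rw [mem_closure_iff_mem_closure_of_isCircuit hT₁ (by simp) ha hTX,
      mem_closure_iff_mem_closure_of_isCircuit hT₂ (by simp) ha hTX, hagree hea heX]
  by_cases hf : f ∈ X
  · exact hswap (a := g) (by simp) heg (by grind)
  by_cases hg : g ∈ X
  · exact hswap (a := f) (by simp) hef (by grind)
  rw [mem_closure_iff_of_triangle_of_triad hT₁ hK₁ he hf hg,
    mem_closure_iff_of_triangle_of_triad hT₂ hK₂ he hf hg, hagree heg (by simp [hef, heX])]

end Closure

section Fan

variable {M : Matroid α} {b : Bool} {l₁ l₂ : List α} {x y z : α}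

lemma isCircuit_of_isTriangle {T : Set α} (hT : IsTriangle M T) : M.IsCircuit T :=
  isCircuit_iff_forall_ssubset.2 ⟨hT.1.1, hT.1.2⟩

lemma isCircuit_of_isFanWith (hF : IsFanWith M b (l₁ ++ x :: y :: z :: l₂))
    (hb : fanBool b l₁.length = true) : M.IsCircuit {x, y, z} := by
  have hT : TriOrTriad M (fanBool b l₁.length) {x, y, z} := hF.2.2.2 l₁ x y z l₂ rfl
  rw [hb] at hT
  exact isCircuit_of_isTriangle hT

lemma isCocircuit_of_isFanWith (hF : IsFanWith M b (l₁ ++ x :: y :: z :: l₂))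
    (hb : fanBool b l₁.length = false) : M.IsCocircuit {x, y, z} := by
  have hT : TriOrTriad M (fanBool b l₁.length) {x, y, z} := hF.2.2.2 l₁ x y z l₂ rfl
  rw [hb] at hT
  exact isCircuit_of_isTriangle hT

end Fan

/-- If `(e₁, e₂, e₃, e₄)` is a fan with `e₁` as a spoke element in both `M₁` and `M₂`,
which have the same ground set, and `M₁ \ e₁ = M₂ \ e₁`, then `M₁ = M₂`. -/
theorem statement5 (M₁ M₂ : Matroid α) (hE : M₁.E = M₂.E) (e₁ e₂ e₃ e₄ : α)
    (hfan₁ : IsFanWith M₁ true [e₁, e₂, e₃, e₄])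
    (hfan₂ : IsFanWith M₂ true [e₁, e₂, e₃, e₄])
    (hdel : mdel M₁ {e₁} = mdel M₂ {e₁}) :
    M₁ = M₂ := by
  have hT {M : Matroid α} (hfan : IsFanWith M true [e₁, e₂, e₃, e₄]) :
      M.IsCircuit {e₁, e₂, e₃} :=
    isCircuit_of_isFanWith (l₁ := []) hfan rfl
  have hK {M : Matroid α} (hfan : IsFanWith M true [e₁, e₂, e₃, e₄]) :
      M.IsCocircuit {e₂, e₃, e₄} :=
    isCocircuit_of_isFanWith (l₁ := [e₁]) hfan rfl
  have he₁ : e₁ ∉ ({e₂, e₃, e₄} : Set α) := by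
    simpa using (List.nodup_cons.1 hfan₁.2.1).1
  exact eq_of_delete_eq_of_triangle_of_triad hE (hT hfan₁) (hT hfan₂) (hK hfan₁) (hK hfan₂) he₁ hdel
end

section
/- Let N be a 3-connected matroid, representable over some field, with ground set E, |E| >= 4, and neither a wheel nor a whirl. Let F = (e_1, ..., e_n) be a fan of N. If e_1 is a rim element of F, then the local connectivity satisfies ⊓({e_1, e_2}, E − F) = 1. -/
/-!
Write `Y = E - F` and number the fan so that `e 1, e 3, ...` are rim elements. Two counts run along
the fan: a segment from one spoke to another is spanned by its spokes, and dually each triad between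
two rim elements costs the complement of the segment one unit of rank. The second count bounds the
rank of `{e 1, e 2} ∪ Y`; the first one, fed into the 3-connectivity inequality for the segment from
`e 2` to the last spoke, bounds the rank of `M` by that of `Y`. Together they give
`r ({e 1, e 2} ∪ Y) ≤ r Y + 1`, and the triad `{e 1, e 2, e 3}`, which meets no circuit in a single
element, gives the reverse inequality.

The argument breaks down only when the complement of that segment is `{e 1}`, that is, when `F` is
even and exhausts `E`. Then the same counts show that `{e (2k), e 1, e 2}` is a triangle and, by
reversing `F` in the dual, that `{e (2k - 1), e (2k), e 1}` is a triad. So the fan closes up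
cyclically, and orthogonality of circuits with the triads leaves only the circuits of a wheel or a
whirl.
-/

open Matroid Set

universe u

variable {α : Type u}

open PaperDefs

namespace PaperDefs

theorem isCircuit_iff (M : Matroid α) (C : Set α) : IsCircuit M C ↔ M.IsCircuit C :=
  Matroid.isCircuit_iff_forall_ssubset.symm

theorem erk_eq_eRk (M : Matroid α) (X : Set α) : erk M X = M.eRk X := by
  apply le_antisymm
  · exact iSup₂_le fun I hI => hI.1.encard_le_eRk_of_subset hI.2
  · obtain ⟨I, hI⟩ := M.exists_isBasis' X
    rw [hI.eRk_eq_encard]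
    exact le_iSup₂_of_le I ⟨hI.indep, hI.subset⟩ le_rfl

/-! ### Wheels and whirls from cyclic fans -/

theorem mem_cycArc {k : ℕ} [NeZero k] {i j x : ZMod k} :
    x ∈ cycArc k i j ↔ (x - i).val < (j - i).val := by
  constructor
  · rintro ⟨m, hm, rfl⟩
    rwa [add_sub_cancel_left, ZMod.val_cast_of_lt (hm.trans (j - i).val_lt)]
  · exact fun h => ⟨(x - i).val, h, by simp⟩

theorem right_notMem_cycArc {k : ℕ} [NeZero k] (i j : ZMod k) : j ∉ cycArc k i j := by
  simp [mem_cycArc]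

theorem left_mem_cycArc {k : ℕ} [NeZero k] {i j : ZMod k} (h : i ≠ j) : i ∈ cycArc k i j := by
  rw [mem_cycArc, sub_self, ZMod.val_zero, ZMod.val_pos]
  exact sub_ne_zero.2 h.symm

theorem forall_zmod_of_add_one {k : ℕ} [NeZero k] {P : ZMod k → Prop} {i : ZMod k} (hi : P i)
    (hP : ∀ j, P j → P (j + 1)) (j : ZMod k) : P j := by
  have walk : ∀ m : ℕ, P (i + m) := by
    intro m
    induction m with
    | zero => simpa using hi
    | succ m ih => simpa [add_assoc] using hP _ ih
  simpa using walk (j - i).val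

theorem zmod_val_add_one_eq_or {k : ℕ} [NeZero k] (i : ZMod k) :
    (i + 1).val = i.val + 1 ∨ i.val + 1 = k ∧ (i + 1).val = 0 := by
  have hval : (i + 1).val = (i.val + 1) % k := by
    rw [ZMod.val_add, ZMod.val_one_eq_one_mod, Nat.add_mod_mod]
  obtain hlt | heq := (Nat.succ_le_of_lt i.val_lt).lt_or_eq
  · exact Or.inl (hval.trans (Nat.mod_eq_of_lt hlt))
  · exact Or.inr ⟨heq, by rw [hval, ← Nat.succ_eq_add_one, heq, Nat.mod_self]⟩

/-- Two spokes together with an arc of the rim joining them, as in the circuits of a wheel. -/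
def arcSet {k : ℕ} (s w : ZMod k → α) (i j : ZMod k) : Set α := {s i, s j} ∪ w '' cycArc k i j

/-- A fan that closes up cyclically and fills the ground set. The rim element `w i` lies between
the spokes `s i` and `s (i + 1)`. -/
structure IsCyclicFan (M : Matroid α) {k : ℕ} (s w : ZMod k → α) : Prop where
  spoke_injective : Function.Injective s
  rim_injective : Function.Injective w
  spoke_ne_rim : ∀ i j, s i ≠ w j
  ground_eq : M.E = range s ∪ range w
  isCircuit : ∀ i, M.IsCircuit {s i, w i, s (i + 1)}
  isCocircuit : ∀ i, M.IsCocircuit {w i, s (i + 1), w (i + 1)}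

namespace IsCyclicFan

variable {M : Matroid α} {k : ℕ} {s w : ZMod k → α} {C : Set α} {i j : ZMod k}

theorem sumElim_injective (h : IsCyclicFan M s w) : Function.Injective (Sum.elim s w) :=
  h.spoke_injective.sumElim h.rim_injective h.spoke_ne_rim

theorem spoke_mem_ground (h : IsCyclicFan M s w) (i : ZMod k) : s i ∈ M.E :=
  h.ground_eq ▸ Or.inl (mem_range_self i)

theorem rim_mem_ground (h : IsCyclicFan M s w) (i : ZMod k) : w i ∈ M.E :=
  h.ground_eq ▸ Or.inr (mem_range_self i)

theorem spoke_notMem_range_rim (h : IsCyclicFan M s w) (i : ZMod k) : s i ∉ range w :=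
  fun ⟨j, hj⟩ => h.spoke_ne_rim i j hj.symm

theorem spoke_mem_insert_range_rim_iff (h : IsCyclicFan M s w) :
    s j ∈ insert (s i) (range w) ↔ j = i := by
  rw [mem_insert_iff, or_iff_left (h.spoke_notMem_range_rim j), h.spoke_injective.eq_iff]

theorem spoke_mem_arcSet_iff (h : IsCyclicFan M s w) {x : ZMod k} :
    s x ∈ arcSet s w i j ↔ x = i ∨ x = j := by
  have : s x ∉ w '' cycArc k i j := fun ⟨y, _, hy⟩ => h.spoke_ne_rim x y hy.symm
  simp [arcSet, this, h.spoke_injective.eq_iff]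

theorem rim_mem_arcSet_iff (h : IsCyclicFan M s w) {x : ZMod k} :
    w x ∈ arcSet s w i j ↔ x ∈ cycArc k i j := by
  simp [arcSet, (h.spoke_ne_rim _ x).symm, h.rim_injective.mem_set_image]

theorem arcSet_subset_ground (h : IsCyclicFan M s w) : arcSet s w i j ⊆ M.E := by
  rintro x ((rfl | rfl) | ⟨y, -, rfl⟩)
  exacts [h.spoke_mem_ground _, h.spoke_mem_ground _, h.rim_mem_ground _]

theorem spoke_add_one_mem_closure (h : IsCyclicFan M s w) (i : ZMod k) :
    s (i + 1) ∈ M.closure {s i, w i} := by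
  refine M.closure_subset_closure ?_
    ((h.isCircuit i).mem_closure_sdiff_singleton_of_mem (e := s (i + 1)) (by simp))
  rintro x ⟨rfl | rfl | rfl, hx⟩ <;> simp_all

theorem spoke_mem_closure (h : IsCyclicFan M s w) (i j : ZMod k) [NeZero k] :
    s j ∈ M.closure (insert (s i) (w '' cycArc k i j)) := by
  have hsub : insert (s i) (w '' cycArc k i j) ⊆ M.E :=
    insert_subset (h.spoke_mem_ground i) (image_subset_iff.2 fun y _ => h.rim_mem_ground y)
  have walk : ∀ m : ℕ, m ≤ (j - i).val →
      s (i + m) ∈ M.closure (insert (s i) (w '' cycArc k i j)) := by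
    intro m
    induction m with
    | zero => exact fun _ => by simpa using M.subset_closure _ hsub (mem_insert _ _)
    | succ m ih =>
      intro hm
      rw [Nat.cast_succ, ← add_assoc]
      refine M.closure_subset_closure_of_subset_closure ?_ (h.spoke_add_one_mem_closure (i + m))
      rintro x (rfl | rfl)
      · exact ih (by lia)
      · exact M.subset_closure _ hsub (mem_insert_of_mem _ ⟨_, ⟨m, hm, rfl⟩, rfl⟩)
  simpa using walk _ le_rfl

theorem not_indep_arcSet [NeZero k] (h : IsCyclicFan M s w) (hij : i ≠ j) :
    ¬ M.Indep (arcSet s w i j) := by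
  intro hI
  refine hI.notMem_closure_sdiff_of_mem (e := s j) (by simp [arcSet])
    (M.closure_subset_closure ?_ (h.spoke_mem_closure i j))
  rintro x (rfl | ⟨y, hy, rfl⟩)
  · exact ⟨by simp [arcSet], h.spoke_injective.ne hij⟩
  · exact ⟨Or.inr ⟨y, hy, rfl⟩, (h.spoke_ne_rim j y).symm⟩

theorem eRank_le [NeZero k] (h : IsCyclicFan M s w) : M.eRank ≤ k := by
  have hE : M.E ⊆ M.closure (range s) := by
    have hs := M.subset_closure (range s) (h.ground_eq ▸ subset_union_left)
    rw [h.ground_eq]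
    refine union_subset hs ?_
    rintro x ⟨i, rfl⟩
    refine M.closure_subset_closure ?_
      ((h.isCircuit i).mem_closure_sdiff_singleton_of_mem (e := w i) (by simp))
    rintro x ⟨rfl | rfl | rfl, hx⟩ <;> simp_all
  calc M.eRank ≤ M.eRk (range s) := by
        rw [← M.eRk_ground, ← M.eRk_closure_eq (range s)]; exact M.eRk_mono hE
    _ ≤ (range s).encard := M.eRk_le_encard _
    _ = k := by
        rw [← image_univ, h.spoke_injective.encard_image, encard_univ,
          ENat.card_eq_coe_fintype_card, ZMod.card]

theorem not_indep_insert_range_rim [NeZero k] (h : IsCyclicFan M s w) (i : ZMod k) :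
    ¬ M.Indep (insert (s i) (range w)) := by
  intro hI
  have hle := hI.encard_le_eRank.trans h.eRank_le
  rw [encard_insert_of_notMem (h.spoke_notMem_range_rim i), ← image_univ,
    h.rim_injective.encard_image, encard_univ, ENat.card_eq_coe_fintype_card, ZMod.card] at hle
  norm_cast at hle
  lia

theorem rim_mem_iff_rim_add_one_mem (h : IsCyclicFan M s w) (hC : M.IsCircuit C)
    (hs : s (i + 1) ∉ C) : w i ∈ C ↔ w (i + 1) ∈ C := by
  constructor <;> intro hw
  · obtain ⟨y, ⟨hy, rfl | rfl | rfl⟩, hne⟩ := (hC.isCocircuit_inter_nontrivial (h.isCocircuit i)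
      ⟨_, hw, by simp⟩).exists_ne (w i) <;> simp_all
  · obtain ⟨y, ⟨hy, rfl | rfl | rfl⟩, hne⟩ := (hC.isCocircuit_inter_nontrivial (h.isCocircuit i)
      ⟨_, hw, by simp⟩).exists_ne (w (i + 1)) <;> simp_all

theorem rim_mem_or_rim_add_one_mem (h : IsCyclicFan M s w) (hC : M.IsCircuit C)
    (hs : s (i + 1) ∈ C) : w i ∈ C ∨ w (i + 1) ∈ C := by
  obtain ⟨y, ⟨hy, rfl | rfl | rfl⟩, hne⟩ := (hC.isCocircuit_inter_nontrivial (h.isCocircuit i)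
    ⟨_, hs, by simp⟩).exists_ne (s (i + 1)) <;> simp_all

variable [NeZero k]

theorem eq_range_rim_of_forall_spoke_notMem (h : IsCyclicFan M s w) (hC : M.IsCircuit C)
    (hs : ∀ i, s i ∉ C) : C = range w := by
  have hsub : C ⊆ range w := by
    intro x hx
    obtain ⟨y, rfl⟩ | hxw := h.ground_eq ▸ hC.subset_ground hx
    exacts [absurd hx (hs y), hxw]
  obtain ⟨x, hx⟩ := hC.nonempty
  obtain ⟨y, rfl⟩ := hsub hx
  exact hsub.antisymm <| range_subset_iff.2 <| forall_zmod_of_add_one hx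
    fun j => (h.rim_mem_iff_rim_add_one_mem hC (hs (j + 1))).1

theorem exists_spoke_mem_rim_mem (h : IsCyclicFan M s w) (hC : M.IsCircuit C) (hi : s i ∈ C) :
    ∃ j, s j ∈ C ∧ w j ∈ C := by
  by_contra! hno
  have hstep : ∀ j, w j ∉ C → w (j + 1) ∉ C := by
    intro j hj
    by_cases hs : s (j + 1) ∈ C
    · exact hno _ hs
    · rwa [← h.rim_mem_iff_rim_add_one_mem hC hs]
  have hw := forall_zmod_of_add_one (hno i hi) hstep
  have := h.rim_mem_or_rim_add_one_mem hC (i := i - 1) (by simpa using hi)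
  exact this.elim (hw _) (hw _)

/-- The case `m = k` is the one where the arc goes all the way round, back to `s i`. -/
theorem exists_next_spoke (h : IsCyclicFan M s w) (hC : M.IsCircuit C) (hs : s i ∈ C)
    (hw : w i ∈ C) :
    ∃ m : ℕ, 0 < m ∧ m ≤ k ∧ s (i + m) ∈ C ∧ ∀ l : ℕ, l < m → w (i + l) ∈ C := by
  classical
  have hk : 0 < k ∧ s (i + k) ∈ C := ⟨NeZero.pos k, by simpa using hs⟩
  have hex : ∃ m : ℕ, 0 < m ∧ s (i + m) ∈ C := ⟨k, hk⟩
  refine ⟨Nat.find hex, (Nat.find_spec hex).1, Nat.find_min' hex hk, (Nat.find_spec hex).2, ?_⟩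
  intro l
  induction l with
  | zero => exact fun _ => by simpa using hw
  | succ l ih =>
    intro hl
    have hnot : s (i + l + 1) ∉ C := fun hmem =>
      Nat.find_min hex hl ⟨l.succ_pos, by simpa [add_assoc] using hmem⟩
    simpa [add_assoc] using (h.rim_mem_iff_rim_add_one_mem hC hnot).1 (ih (by lia))

theorem isCircuit_cases (h : IsCyclicFan M s w) (hC : M.IsCircuit C) :
    C = range w ∨ (∃ i, C = insert (s i) (range w)) ∨ ∃ i j, i ≠ j ∧ C = arcSet s w i j := by
  by_cases hsp : ∃ i, s i ∈ C
  swap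
  · exact Or.inl (h.eq_range_rim_of_forall_spoke_notMem hC (not_exists.1 hsp))
  right
  obtain ⟨i₀, hi₀⟩ := hsp
  obtain ⟨i, hs, hw⟩ := h.exists_spoke_mem_rim_mem hC hi₀
  obtain ⟨m, hm0, hmk, hsm, hwm⟩ := h.exists_next_spoke hC hs hw
  obtain hlt | rfl := hmk.lt_or_eq
  · right
    have hval : ((m : ℕ) : ZMod k).val = m := ZMod.val_cast_of_lt hlt
    have hne : i ≠ i + m := by
      rw [Ne, left_eq_add, ← ZMod.val_eq_zero, hval]
      exact hm0.ne'
    refine ⟨i, i + m, hne, (hC.eq_of_not_indep_subset (h.not_indep_arcSet hne) ?_).symm⟩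
    rintro x ((rfl | rfl) | ⟨y, ⟨l, hl, rfl⟩, rfl⟩)
    · exact hs
    · exact hsm
    · rw [add_sub_cancel_left, hval] at hl
      exact hwm l hl
  · left
    refine ⟨i, (hC.eq_of_not_indep_subset (h.not_indep_insert_range_rim i) ?_).symm⟩
    refine insert_subset hs (range_subset_iff.2 fun y => ?_)
    simpa using hwm _ (y - i).val_lt

theorem isCircuit_arcSet (h : IsCyclicFan M s w) (hij : i ≠ j) : M.IsCircuit (arcSet s w i j) := by
  obtain ⟨C, hCA, hC⟩ :=
    Dep.exists_isCircuit_subset ⟨h.not_indep_arcSet hij, h.arcSet_subset_ground⟩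
  have hwj : w j ∉ arcSet s w i j := by
    rw [h.rim_mem_arcSet_iff]
    exact right_notMem_cycArc i j
  rcases h.isCircuit_cases hC with rfl | ⟨x, rfl⟩ | ⟨x, y, hxy, rfl⟩
  · exact absurd (hCA (mem_range_self j)) hwj
  · exact absurd (hCA (Or.inr (mem_range_self j))) hwj
  · have hx := h.spoke_mem_arcSet_iff.1 (hCA (h.spoke_mem_arcSet_iff.2 (Or.inl rfl)))
    have hy := h.spoke_mem_arcSet_iff.1 (hCA (h.spoke_mem_arcSet_iff.2 (Or.inr rfl)))
    have hwx := hCA (h.rim_mem_arcSet_iff.2 (left_mem_cycArc hxy))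
    rcases hx with rfl | rfl
    · rcases hy with rfl | rfl
      exacts [absurd rfl hxy, hC]
    · exact absurd hwx hwj

theorem isCircuit_range_rim (h : IsCyclicFan M s w) (hw : ¬ M.Indep (range w)) :
    M.IsCircuit (range w) := by
  obtain ⟨C, hCw, hC⟩ :=
    Dep.exists_isCircuit_subset ⟨hw, h.ground_eq ▸ subset_union_right⟩
  exact h.eq_range_rim_of_forall_spoke_notMem hC
    (fun i hi => h.spoke_notMem_range_rim i (hCw hi)) ▸ hC

theorem isCircuit_insert_range_rim (h : IsCyclicFan M s w) (hw : M.Indep (range w))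
    (i : ZMod k) : M.IsCircuit (insert (s i) (range w)) := by
  obtain ⟨C, hCw, hC⟩ := Dep.exists_isCircuit_subset ⟨h.not_indep_insert_range_rim i,
    insert_subset (h.spoke_mem_ground i) (h.ground_eq ▸ subset_union_right)⟩
  rcases h.isCircuit_cases hC with rfl | ⟨j, rfl⟩ | ⟨x, y, hxy, rfl⟩
  · exact absurd hw hC.not_indep
  · rwa [h.spoke_mem_insert_range_rim_iff.1 (hCw (mem_insert _ _))] at hC
  · have hx := h.spoke_mem_insert_range_rim_iff.1 (hCw (h.spoke_mem_arcSet_iff.2 (Or.inl rfl)))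
    have hy := h.spoke_mem_insert_range_rim_iff.1 (hCw (h.spoke_mem_arcSet_iff.2 (Or.inr rfl)))
    exact absurd (hx.trans hy.symm) hxy

theorem isWhirl (h : IsCyclicFan M s w) (hk : 2 ≤ k) (hw : M.Indep (range w)) : IsWhirl M := by
  refine ⟨k, hk, s, w, h.sumElim_injective, h.ground_eq, fun C => ?_⟩
  rw [isCircuit_iff]
  constructor
  · exact fun hC => (h.isCircuit_cases hC).resolve_left fun hCw => hC.not_indep (hCw ▸ hw)
  · rintro (⟨i, rfl⟩ | ⟨i, j, hij, rfl⟩)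
    exacts [h.isCircuit_insert_range_rim hw i, h.isCircuit_arcSet hij]

theorem isWheel (h : IsCyclicFan M s w) (hk : 2 ≤ k) (hw : ¬ M.Indep (range w)) : IsWheel M := by
  have hrim := h.isCircuit_range_rim hw
  refine ⟨k, hk, s, w, h.sumElim_injective, h.ground_eq, fun C => ?_⟩
  rw [isCircuit_iff]
  constructor
  · intro hC
    rcases h.isCircuit_cases hC with hCw | ⟨i, rfl⟩ | harc
    · exact Or.inl hCw
    · exact Or.inl (hC.eq_of_superset_isCircuit hrim (subset_insert _ _))
    · exact Or.inr harc
  · rintro (rfl | ⟨i, j, hij, rfl⟩)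
    exacts [hrim, h.isCircuit_arcSet hij]

end IsCyclicFan

/-! ### Ranks along alternating sequences of triangles and triads -/

theorem notMem_closure_of_isCocircuit {M : Matroid α} {K X : Set α} {x : α} (hK : M.IsCocircuit K)
    (hx : x ∈ K) (hX : Disjoint X K) : x ∉ M.closure X := by
  intro hcl
  obtain ⟨C, hCX, hC, hxC⟩ := exists_isCircuit_of_mem_closure hcl fun h => hX.ne_of_mem h hx rfl
  obtain ⟨y, ⟨hyC, hyK⟩, hyx⟩ := (hC.isCocircuit_inter_nontrivial hK ⟨x, hxC, hx⟩).exists_ne x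
  exact hX.ne_of_mem ((hCX hyC).resolve_left hyx) hyK rfl

theorem isCircuit_triple {M : Matroid α} {a b c : α} (hab : M.Indep {a, b}) (hac : M.Indep {a, c})
    (hbc : M.Indep {b, c}) (hab' : a ≠ b) (hac' : a ≠ c) (hbc' : b ≠ c)
    (hr : M.eRk {a, b, c} ≤ 2) : M.IsCircuit {a, b, c} := by
  refine isCircuit_iff_dep_forall_sdiff_singleton_indep.2 ⟨⟨fun hI => ?_, ?_⟩, ?_⟩
  · rw [hI.eRk_eq_encard, encard_eq_three.2 ⟨a, b, c, hab', hac', hbc', rfl⟩] at hr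
    norm_num at hr
  · exact insert_subset (hab.subset_ground (by simp)) hbc.subset_ground
  · rintro x (rfl | rfl | rfl)
    · exact hbc.subset (by grind)
    · exact hac.subset (by grind)
    · exact hab.subset (by grind)

theorem eRk_image_Icc_le_of_isCircuit {M : Matroid α} {f : ℕ → α} {a m : ℕ}
    (h : ∀ i < m, M.IsCircuit {f (a + 2 * i), f (a + 2 * i + 1), f (a + 2 * i + 2)}) :
    M.eRk (f '' Icc a (a + 2 * m)) ≤ m + 1 := by
  induction m with
  | zero => simp
  | succ m ih =>
    set X := insert (f (a + 2 * m + 2)) (f '' Icc a (a + 2 * m))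
    have hcl : f (a + 2 * m + 1) ∈ M.closure X := by
      refine M.closure_subset_closure ?_
        ((h m m.lt_succ_self).mem_closure_sdiff_singleton_of_mem (e := f (a + 2 * m + 1)) (by simp))
      rintro x ⟨rfl | rfl | rfl, hx⟩
      · exact Or.inr ⟨_, by simp, rfl⟩
      · exact absurd rfl hx
      · exact Or.inl rfl
    have hsub : f '' Icc a (a + 2 * (m + 1)) ⊆ insert (f (a + 2 * m + 1)) X := by
      rintro _ ⟨i, ⟨hi₁, hi₂⟩, rfl⟩
      obtain rfl | rfl | hi : i = a + 2 * m + 1 ∨ i = a + 2 * m + 2 ∨ i ≤ a + 2 * m := by lia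
      exacts [Or.inl rfl, Or.inr (Or.inl rfl), Or.inr (Or.inr ⟨i, ⟨hi₁, hi⟩, rfl⟩)]
    calc M.eRk (f '' Icc a (a + 2 * (m + 1))) ≤ M.eRk (insert (f (a + 2 * m + 1)) X) :=
          M.eRk_mono hsub
      _ = M.eRk X := by
          rw [← M.eRk_closure_eq, closure_insert_eq_of_mem_closure hcl, M.eRk_closure_eq]
      _ ≤ M.eRk (f '' Icc a (a + 2 * m)) + 1 := M.eRk_insert_le_add_one _ _
      _ ≤ (m + 1 : ℕ) + 1 := by push_cast; gcongr; exact ih fun i hi => h i (by lia)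

theorem eRk_compl_image_Icc_add_le_of_isCocircuit {M : Matroid α} {f : ℕ → α} {a m : ℕ}
    (hf : InjOn f (Icc a (a + 2 * m))) (hE : f '' Icc a (a + 2 * m) ⊆ M.E)
    (h : ∀ i < m, M.IsCocircuit {f (a + 2 * i), f (a + 2 * i + 1), f (a + 2 * i + 2)}) :
    M.eRk (M.E \ f '' Icc a (a + 2 * m)) + m ≤ M.eRank := by
  have hdual : M✶.eRk (f '' Icc a (a + 2 * m)) ≤ m + 1 :=
    eRk_image_Icc_le_of_isCircuit h
  have hrank := M.eRk_dual_add_eRank _ hE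
  have hcard : (Icc a (a + 2 * m)).encard = 2 * m + 1 := by
    rw [encard_eq_coe_toFinset_card, toFinset_Icc, Nat.card_Icc]
    norm_cast
    lia
  rw [hf.encard_image, hcard] at hrank
  generalize M✶.eRk _ = x at *
  generalize M.eRk _ = y at *
  generalize M.eRank = r at *
  enat_to_nat
  lia

/-! ### Fans in 3-connected matroids -/

theorem ThreeConn.eRank_add_one_lt {M : Matroid α} {X : Set α} (h : ThreeConn M) (hX : X ⊆ M.E)
    (hX₂ : 2 ≤ X.encard) (hXc : 2 ≤ (M.E \ X).encard) :
    M.eRank + 1 < M.eRk X + M.eRk (M.E \ X) := by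
  rw [← not_le, ← M.eRk_ground]
  simp only [← erk_eq_eRk]
  exact fun hle => h.2 X (M.E \ X) ⟨union_sdiff_cancel hX, disjoint_sdiff_right, hX₂, hXc, hle⟩

theorem two_le_encard_sdiff_pair {E : Set α} (hE : 4 ≤ E.encard) (a b : α) :
    2 ≤ (E \ {a, b}).encard := by
  have hle := encard_le_encard_sdiff_add_encard E {a, b}
  have hpair : ({a, b} : Set α).encard ≤ 2 := by
    simpa [one_add_one_eq_two] using encard_insert_le {b} a
  generalize (E \ {a, b}).encard = x at *
  generalize ({a, b} : Set α).encard = y at *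
  generalize E.encard = z at *
  enat_to_nat
  lia

theorem ThreeConn.pairwise_indep_pair {M : Matroid α} (h : ThreeConn M) (hE : 4 ≤ M.E.encard) :
    M.E.Pairwise fun a b => M.Indep {a, b} := by
  intro a ha b hb hab
  have hlt := h.eRank_add_one_lt (pair_subset ha hb) (encard_pair hab).ge
    (two_le_encard_sdiff_pair hE a b)
  rw [indep_iff_eRk_eq_encard_of_finite (toFinite _), encard_pair hab]
  have hle := M.eRk_le_encard {a, b}
  rw [encard_pair hab] at hle
  have hle' := M.eRk_le_eRank (M.E \ {a, b})
  generalize M.eRk {a, b} = x at *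
  generalize M.eRk _ = y at *
  generalize M.eRank = r at *
  enat_to_nat
  lia

theorem ThreeConn.pairwise_coindep_pair {M : Matroid α} (h : ThreeConn M) (hE : 4 ≤ M.E.encard) :
    M.E.Pairwise fun a b => M.Coindep {a, b} := by
  intro a ha b hb hab
  have hlt := h.eRank_add_one_lt (pair_subset ha hb) (encard_pair hab).ge
    (two_le_encard_sdiff_pair hE a b)
  have hdual := M.eRk_dual_add_eRank {a, b} (pair_subset ha hb)
  rw [coindep_def, indep_iff_eRk_eq_encard_of_finite (toFinite _), encard_pair hab]
  have hle := M.eRk_le_encard {a, b}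
  have hle' := M✶.eRk_le_encard {a, b}
  rw [encard_pair hab] at hle hle' hdual
  generalize M.eRk {a, b} = x at *
  generalize M✶.eRk {a, b} = z at *
  generalize M.eRk _ = y at *
  generalize M.eRank = r at *
  enat_to_nat
  lia

theorem fanSet_eq_image (n : ℕ) (e : ℕ → α) : fanSet n e = e '' Icc 1 n := by
  ext x
  exact ⟨fun ⟨i, h₁, hn, hx⟩ => ⟨i, ⟨h₁, hn⟩, hx.symm⟩,
    fun ⟨i, ⟨h₁, hn⟩, hx⟩ => ⟨i, h₁, hn, hx.symm⟩⟩

theorem triOrTriad_dual_not {M : Matroid α} {b : Bool} {T : Set α} :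
    TriOrTriad M✶ (!b) T ↔ TriOrTriad M b T := by
  cases b <;> simp [TriOrTriad, IsTriad]

/-- The spokes of the fan `(e 1, ..., e (2 * k))` with first element a rim element, indexed
cyclically so that `cyclicSpoke k e i` precedes `cyclicRim k e i`. Thus `e (2 * k)` has index
`0`. -/
def cyclicSpoke (k : ℕ) (e : ℕ → α) (i : ZMod k) : α := e (2 * (i - 1).val + 2)

/-- The rim elements of the fan `(e 1, ..., e (2 * k))` with first element a rim element, indexed
cyclically. -/
def cyclicRim (k : ℕ) (e : ℕ → α) (i : ZMod k) : α := e (2 * i.val + 1)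

namespace IsFanFun

variable {M : Matroid α} {n k m : ℕ} {e : ℕ → α}

theorem three_le {b : Bool} (h : IsFanFun M b n e) : 3 ≤ n := h.1

theorem mem_ground {b : Bool} {i : ℕ} (h : IsFanFun M b n e) (hi : 1 ≤ i) (hin : i ≤ n) :
    e i ∈ M.E :=
  h.2.2.1 i hi hin

theorem injOn {b : Bool} (h : IsFanFun M b n e) : InjOn e (Icc 1 n) :=
  fun i hi j hj => h.2.1 i j hi.1 hi.2 hj.1 hj.2

theorem image_subset_ground {b : Bool} (h : IsFanFun M b n e) : e '' Icc 1 n ⊆ M.E :=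
  image_subset_iff.2 fun _ hi => h.mem_ground hi.1 hi.2

theorem isCircuit {i : ℕ} (h : IsFanFun M false n e) (hi : 1 ≤ i) (hin : 2 * i + 2 ≤ n) :
    M.IsCircuit {e (2 * i), e (2 * i + 1), e (2 * i + 2)} := by
  have := h.2.2.2 (2 * i) (by lia) hin
  rw [show posBool false (2 * i) = true by simp [posBool]] at this
  exact (isCircuit_iff _ _).1 this.1

theorem isCocircuit {i : ℕ} (h : IsFanFun M false n e) (hin : 2 * i + 3 ≤ n) :
    M.IsCocircuit {e (2 * i + 1), e (2 * i + 2), e (2 * i + 3)} := by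
  have := h.2.2.2 (2 * i + 1) (by lia) hin
  rw [show posBool false (2 * i + 1) = false by simp [posBool, Nat.add_mod]] at this
  exact (isCircuit_iff _ _).1 this.1

theorem dual_reverse (h : IsFanFun M false (2 * k) e) :
    IsFanFun M✶ false (2 * k) fun i => e (2 * k + 1 - i) := by
  obtain ⟨hn, hinj, hE, htri⟩ := h
  refine ⟨hn, fun i j hi hi' hj hj' hij => ?_, fun i hi hi' => hE _ (by lia) (by lia),
    fun i hi hi' => ?_⟩
  · have := hinj _ _ (by lia) (by lia) (by lia) (by lia) hij
    lia
  · obtain ⟨j, hj⟩ : ∃ j, i + j + 1 = 2 * k := ⟨2 * k - 1 - i, by lia⟩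
    have hbool : posBool false i = !posBool false j := by
      obtain hpar | hpar := Nat.mod_two_eq_zero_or_one i
      · simp [posBool, hpar, show j % 2 = 1 by lia]
      · simp [posBool, hpar, show j % 2 = 0 by lia]
    have hset : ({e (2 * k + 1 - i), e (2 * k + 1 - (i + 1)), e (2 * k + 1 - (i + 2))} : Set α)
        = {e j, e (j + 1), e (j + 2)} := by
      rw [show 2 * k + 1 - i = j + 2 by lia, show 2 * k + 1 - (i + 1) = j + 1 by lia,
        show 2 * k + 1 - (i + 2) = j by lia]
      rw [insert_comm, pair_comm, insert_comm]
    rw [hbool, hset, triOrTriad_dual_not]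
    exact htri j (by lia) (by lia)

theorem eRk_image_Icc_le (h : IsFanFun M false n e) (hm : 2 * m + 2 ≤ n) :
    M.eRk (e '' Icc 2 (2 + 2 * m)) ≤ m + 1 :=
  eRk_image_Icc_le_of_isCircuit fun i hi => by
    simpa only [Nat.mul_add, mul_one, add_comm 2, add_assoc] using
      h.isCircuit (i := i + 1) (by lia) (by lia)

theorem eRk_compl_image_Icc_add_le (h : IsFanFun M false n e) (hm : 2 * m + 3 ≤ n) :
    M.eRk (M.E \ e '' Icc 3 (3 + 2 * m)) + m ≤ M.eRank := by
  have hsub : Icc 3 (3 + 2 * m) ⊆ Icc 1 n := Icc_subset_Icc (by lia) (by lia)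
  refine eRk_compl_image_Icc_add_le_of_isCocircuit (h.injOn.mono hsub)
    ((image_mono hsub).trans h.image_subset_ground) fun i hi => ?_
  have := h.isCocircuit (i := i + 1) (by lia)
  rwa [show 2 * (i + 1) + 1 = 3 + 2 * i by ring, show 2 * (i + 1) + 2 = 3 + 2 * i + 1 by ring,
    show 2 * (i + 1) + 3 = 3 + 2 * i + 2 by ring] at this

theorem eRank_lt_add_eRk_compl_image_Icc (h : IsFanFun M false n e) (hM : ThreeConn M)
    (hm : 1 ≤ m) (hmn : 2 * m + 2 ≤ n) (hZ : 2 ≤ (M.E \ e '' Icc 2 (2 + 2 * m)).encard) :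
    M.eRank < m + M.eRk (M.E \ e '' Icc 2 (2 + 2 * m)) := by
  have hsub : Icc 2 (2 + 2 * m) ⊆ Icc 1 n := Icc_subset_Icc (by lia) (by lia)
  have hcard : 2 ≤ (e '' Icc 2 (2 + 2 * m)).encard := by
    rw [(h.injOn.mono hsub).encard_image, encard_eq_coe_toFinset_card, toFinset_Icc, Nat.card_Icc]
    norm_cast
    lia
  refine lt_of_add_lt_add_right (a := 1) ?_
  calc M.eRank + 1 < M.eRk (e '' Icc 2 (2 + 2 * m)) + M.eRk (M.E \ e '' Icc 2 (2 + 2 * m)) :=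
        hM.eRank_add_one_lt ((image_mono hsub).trans h.image_subset_ground) hcard hZ
    _ ≤ (m + 1) + M.eRk (M.E \ e '' Icc 2 (2 + 2 * m)) := by gcongr; exact h.eRk_image_Icc_le hmn
    _ = m + M.eRk (M.E \ e '' Icc 2 (2 + 2 * m)) + 1 := by ring

theorem notMem_image_Icc {b : Bool} {i a c : ℕ} (h : IsFanFun M b n e) (hi : i ∈ Icc 1 n)
    (ha : 1 ≤ a) (hc : c ≤ n) (hia : i ∉ Icc a c) : e i ∉ e '' Icc a c :=
  fun hmem => hia ((h.injOn.mem_image_iff (Icc_subset_Icc ha hc) hi).1 hmem)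

theorem eRk_pair_union_compl_add_le (h : IsFanFun M false n e) (hm : 2 * m + 3 ≤ n) :
    M.eRk ({e 1, e 2} ∪ (M.E \ fanSet n e)) + m ≤ M.eRank := by
  have hsub : Icc 3 (3 + 2 * m) ⊆ Icc 1 n := Icc_subset_Icc (by lia) (by lia)
  have hpair : {e 1, e 2} ⊆ M.E \ e '' Icc 3 (3 + 2 * m) := pair_subset
    ⟨h.mem_ground le_rfl (by lia), h.notMem_image_Icc (by grind) (by lia) (by lia) (by simp)⟩
    ⟨h.mem_ground (by lia) (by lia), h.notMem_image_Icc (by grind) (by lia) (by lia) (by simp)⟩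
  have hY : M.E \ fanSet n e ⊆ M.E \ e '' Icc 3 (3 + 2 * m) := by
    rw [fanSet_eq_image]
    gcongr
  refine le_trans ?_ (h.eRk_compl_image_Icc_add_le hm)
  gcongr
  exact M.eRk_mono (union_subset hpair hY)

theorem eRk_pair_union_compl_le_of_three (h : IsFanFun M false 3 e) (hM : ThreeConn M)
    (hE : 4 ≤ M.E.encard) :
    M.eRk ({e 1, e 2} ∪ (M.E \ fanSet 3 e)) ≤ M.eRk (M.E \ fanSet 3 e) + 1 := by
  have hspan := (hM.pairwise_coindep_pair hE (h.mem_ground le_rfl (by lia))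
    (h.mem_ground (by lia) le_rfl) (h.injOn.ne (by simp) (by simp) (by simp))).compl_spanning.eRk_eq
  have hsub : M.E \ {e 1, e 3} ⊆ insert (e 2) (M.E \ fanSet 3 e) := by
    rintro x ⟨hxE, hx⟩
    refine or_iff_not_imp_left.2 fun hx₂ => ⟨hxE, ?_⟩
    rintro ⟨i, hi₁, hi₃, rfl⟩
    interval_cases i <;> simp_all
  calc M.eRk ({e 1, e 2} ∪ (M.E \ fanSet 3 e)) ≤ M.eRk (M.E \ {e 1, e 3}) :=
        hspan ▸ M.eRk_le_eRank _
    _ ≤ M.eRk (insert (e 2) (M.E \ fanSet 3 e)) := M.eRk_mono hsub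
    _ ≤ M.eRk (M.E \ fanSet 3 e) + 1 := M.eRk_insert_le_add_one _ _

theorem eRk_pair_union_compl_le_of_odd (h : IsFanFun M false (2 * m + 5) e) (hM : ThreeConn M) :
    M.eRk ({e 1, e 2} ∪ (M.E \ fanSet (2 * m + 5) e)) ≤
      M.eRk (M.E \ fanSet (2 * m + 5) e) + 1 := by
  set Y := M.E \ fanSet (2 * m + 5) e with hY
  set Z := M.E \ e '' Icc 2 (2 + 2 * (m + 1)) with hZ
  have hZY : Z ⊆ insert (e 1) (insert (e (2 * m + 5)) Y) := by
    rintro x ⟨hxE, hx⟩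
    refine or_iff_not_imp_left.2 fun hx₁ => or_iff_not_imp_left.2 fun hxn => ⟨hxE, ?_⟩
    rintro ⟨i, hi₁, hin, rfl⟩
    exact hx ⟨i, by grind, rfl⟩
  have hpair : {e 1, e (2 * m + 5)} ⊆ Z := pair_subset
    ⟨h.mem_ground le_rfl (by lia), h.notMem_image_Icc (by simp) (by lia) (by lia) (by simp)⟩
    ⟨h.mem_ground (by lia) le_rfl, h.notMem_image_Icc (by simp) (by lia) (by lia) (by grind)⟩
  have hZcard : 2 ≤ Z.encard :=
    (encard_pair (h.injOn.ne (by simp) (by simp) (by lia))).symm.trans_le (encard_le_encard hpair)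
  have hZle : M.eRk Z ≤ M.eRk Y + 1 + 1 := (M.eRk_mono hZY).trans <|
    (M.eRk_insert_le_add_one _ _).trans (by gcongr; exact M.eRk_insert_le_add_one _ _)
  have hlt := h.eRank_lt_add_eRk_compl_image_Icc hM (m := m + 1) (by lia) (by lia) hZcard
  have hle := h.eRk_pair_union_compl_add_le (m := m + 1) (by lia)
  rw [← hZ] at hlt
  rw [← hY] at hle
  push_cast at hlt hle
  generalize M.eRk Z = z at *
  generalize M.eRk Y = y at *
  generalize M.eRk _ = x at *
  generalize M.eRank = r at *
  clear hZ hY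
  enat_to_nat
  lia

theorem eRk_pair_union_compl_le_of_even (h : IsFanFun M false (2 * m + 4) e) (hM : ThreeConn M)
    (hYne : (M.E \ fanSet (2 * m + 4) e).Nonempty) :
    M.eRk ({e 1, e 2} ∪ (M.E \ fanSet (2 * m + 4) e)) ≤
      M.eRk (M.E \ fanSet (2 * m + 4) e) + 1 := by
  set Y := M.E \ fanSet (2 * m + 4) e with hY
  set Z := M.E \ e '' Icc 2 (2 + 2 * (m + 1)) with hZ
  have hZY : Z ⊆ insert (e 1) Y := by
    rintro x ⟨hxE, hx⟩
    refine or_iff_not_imp_left.2 fun hx₁ => ⟨hxE, ?_⟩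
    rintro ⟨i, hi₁, hin, rfl⟩
    exact hx ⟨i, by grind, rfl⟩
  have hZcard : 2 ≤ Z.encard := by
    obtain ⟨y, hyE, hyF⟩ := hYne
    have hne : e 1 ≠ y := fun hy => hyF ⟨1, le_rfl, by lia, hy.symm⟩
    rw [← encard_pair hne]
    refine encard_le_encard (pair_subset ⟨h.mem_ground le_rfl (by lia),
      h.notMem_image_Icc (by simp) (by lia) (by lia) (by simp)⟩ ⟨hyE, ?_⟩)
    rintro ⟨i, ⟨hi₂, hin⟩, rfl⟩
    exact hyF ⟨i, by lia, by lia, rfl⟩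
  have hZle : M.eRk Z ≤ M.eRk Y + 1 := (M.eRk_mono hZY).trans (M.eRk_insert_le_add_one _ _)
  have hlt := h.eRank_lt_add_eRk_compl_image_Icc hM (m := m + 1) (by lia) (by lia) hZcard
  have hle := h.eRk_pair_union_compl_add_le (m := m) (by lia)
  rw [← hZ] at hlt
  rw [← hY] at hle
  push_cast at hlt
  generalize M.eRk Z = z at *
  generalize M.eRk Y = y at *
  generalize M.eRk _ = x at *
  generalize M.eRank = r at *
  clear hZ hY
  enat_to_nat
  lia

theorem add_one_le_eRk_pair_union_compl (h : IsFanFun M false n e) :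
    M.eRk (M.E \ fanSet n e) + 1 ≤ M.eRk ({e 1, e 2} ∪ (M.E \ fanSet n e)) := by
  have hn := h.three_le
  have hdisj : Disjoint (M.E \ fanSet n e) {e 1, e 2, e 3} := by
    refine disjoint_sdiff_left.mono_right ?_
    rintro _ (rfl | rfl | rfl)
    exacts [⟨1, by lia, by lia, rfl⟩, ⟨2, by lia, by lia, rfl⟩, ⟨3, by lia, by lia, rfl⟩]
  have hcl := notMem_closure_of_isCocircuit (h.isCocircuit (i := 0) (by lia)) (x := e 1)
    (by simp) hdisj
  rw [← eRk_insert_eq_add_one ⟨h.mem_ground le_rfl (by lia), hcl⟩]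
  exact M.eRk_mono (insert_subset (by simp) subset_union_right)

theorem eRk_pair_union_compl_eq (h : IsFanFun M false n e) (hM : ThreeConn M) (hE : 4 ≤ M.E.encard)
    (hne : Even n → (M.E \ fanSet n e).Nonempty) :
    M.eRk ({e 1, e 2} ∪ (M.E \ fanSet n e)) = M.eRk (M.E \ fanSet n e) + 1 := by
  refine le_antisymm ?_ h.add_one_le_eRk_pair_union_compl
  have hn := h.three_le
  obtain ⟨m, rfl | rfl⟩ := n.even_or_odd'
  · obtain ⟨l, rfl⟩ : ∃ l, m = l + 2 := ⟨m - 2, by lia⟩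
    exact eRk_pair_union_compl_le_of_even h hM (hne (by simp))
  · obtain rfl | ⟨l, rfl⟩ : m = 1 ∨ ∃ l, m = l + 2 := by
      obtain rfl | hm : m = 1 ∨ 2 ≤ m := by lia
      exacts [Or.inl rfl, Or.inr ⟨m - 2, by lia⟩]
    exacts [eRk_pair_union_compl_le_of_three h hM hE, eRk_pair_union_compl_le_of_odd h hM]

theorem isCircuit_last_first (h : IsFanFun M false (2 * k) e) (hE : M.E ⊆ fanSet (2 * k) e)
    (hind : M.E.Pairwise fun a b => M.Indep {a, b})
    (hcoind : M.E.Pairwise fun a b => M.Coindep {a, b}) : M.IsCircuit {e (2 * k), e 1, e 2} := by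
  obtain ⟨m, rfl⟩ : ∃ m, k = m + 2 := ⟨k - 2, by have := h.three_le; lia⟩
  have hmem : ∀ i ∈ Icc 1 (2 * (m + 2)), e i ∈ M.E := fun i hi => h.mem_ground hi.1 hi.2
  have hne : e (2 * (m + 2)) ≠ e 1 ∧ e (2 * (m + 2)) ≠ e 2 ∧ e 1 ≠ e 2 :=
    ⟨h.injOn.ne (by grind) (by grind) (by lia), h.injOn.ne (by grind) (by grind) (by lia),
      h.injOn.ne (by grind) (by grind) (by lia)⟩
  have hrank : M.eRank ≤ m + 2 := by
    have hco : M.Coindep {e 1} :=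
      (hcoind (hmem 1 (by grind)) (hmem 2 (by grind)) hne.2.2).subset (by simp)
    rw [← hco.compl_spanning.eRk_eq]
    refine (M.eRk_mono ?_).trans
      ((h.eRk_image_Icc_le (m := m + 1) (by lia)).trans_eq (by push_cast; ring))
    rintro x ⟨hxE, hx⟩
    obtain ⟨i, hi₁, hi, rfl⟩ := hE hxE
    have : i ≠ 1 := by
      rintro rfl
      exact hx rfl
    exact ⟨i, by grind, rfl⟩
  have hcompl : {e (2 * (m + 2)), e 1, e 2} ⊆ M.E \ e '' Icc 3 (3 + 2 * m) := by
    rintro _ (rfl | rfl | rfl) <;>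
      exact ⟨hmem _ (by grind), h.notMem_image_Icc (by grind) (by lia) (by lia) (by grind)⟩
  have hle := h.eRk_compl_image_Icc_add_le (m := m) (by lia)
  refine isCircuit_triple (hind (hmem _ (by grind)) (hmem _ (by grind)) hne.1)
    (hind (hmem _ (by grind)) (hmem _ (by grind)) hne.2.1)
    (hind (hmem _ (by grind)) (hmem _ (by grind)) hne.2.2) hne.1 hne.2.1 hne.2.2
    ((M.eRk_mono hcompl).trans ?_)
  generalize M.eRk _ = x at *
  generalize M.eRank = r at *
  enat_to_nat
  lia

theorem isCocircuit_last_first (h : IsFanFun M false (2 * k) e) (hE : M.E ⊆ fanSet (2 * k) e)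
    (hind : M.E.Pairwise fun a b => M.Indep {a, b})
    (hcoind : M.E.Pairwise fun a b => M.Coindep {a, b}) :
    M.IsCocircuit {e (2 * k - 1), e (2 * k), e 1} := by
  have hn := h.three_le
  have hE' : M✶.E ⊆ fanSet (2 * k) fun i => e (2 * k + 1 - i) := by
    intro x hx
    obtain ⟨i, hi₁, hi, rfl⟩ := hE hx
    exact ⟨2 * k + 1 - i, by lia, by lia, congrArg e (by lia)⟩
  have hC := h.dual_reverse.isCircuit_last_first hE' hcoind (by simpa using hind)
  rw [show 2 * k + 1 - 2 * k = 1 by lia, show 2 * k + 1 - 1 = 2 * k by lia,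
    show 2 * k + 1 - 2 = 2 * k - 1 by lia, insert_comm, pair_comm, insert_comm] at hC
  exact hC

theorem ground_eq_range_cyclicSpoke_union_range_cyclicRim [NeZero k]
    (h : IsFanFun M false (2 * k) e) (hE : M.E ⊆ fanSet (2 * k) e) :
    M.E = range (cyclicSpoke k e) ∪ range (cyclicRim k e) := by
  refine subset_antisymm (fun x hx => ?_) (union_subset ?_ ?_)
  · obtain ⟨i, hi₁, hi, rfl⟩ := hE hx
    obtain ⟨j, rfl | rfl⟩ := i.even_or_odd'
    · refine Or.inl ⟨((j - 1 : ℕ) : ZMod k) + 1, ?_⟩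
      rw [cyclicSpoke, add_sub_cancel_right, ZMod.val_cast_of_lt (by lia),
        show 2 * (j - 1) + 2 = 2 * j by lia]
    · refine Or.inr ⟨(j : ZMod k), ?_⟩
      rw [cyclicRim, ZMod.val_cast_of_lt (by lia)]
  · rintro _ ⟨i, rfl⟩
    have := (i - 1).val_lt
    exact h.mem_ground (by lia) (by lia)
  · rintro _ ⟨i, rfl⟩
    have := i.val_lt
    exact h.mem_ground (by lia) (by lia)

theorem isCyclicFan [NeZero k] (h : IsFanFun M false (2 * k) e) (hE : M.E ⊆ fanSet (2 * k) e)
    (hind : M.E.Pairwise fun a b => M.Indep {a, b})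
    (hcoind : M.E.Pairwise fun a b => M.Coindep {a, b}) :
    IsCyclicFan M (cyclicSpoke k e) (cyclicRim k e) where
  spoke_injective i j hij := by
    have hi := (i - 1).val_lt
    have hj := (j - 1).val_lt
    have := h.injOn ⟨by lia, by lia⟩ ⟨by lia, by lia⟩ hij
    exact sub_left_injective (ZMod.val_injective k (show (i - 1).val = (j - 1).val by lia))
  rim_injective i j hij := by
    have hi := i.val_lt
    have hj := j.val_lt
    have := h.injOn ⟨by lia, by lia⟩ ⟨by lia, by lia⟩ hij
    exact ZMod.val_injective k (by lia)
  spoke_ne_rim i j hij := by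
    have hi := (i - 1).val_lt
    have hj := j.val_lt
    have := h.injOn ⟨by lia, by lia⟩ ⟨by lia, by lia⟩ hij
    lia
  ground_eq := h.ground_eq_range_cyclicSpoke_union_range_cyclicRim hE
  isCircuit i := by
    have hlt := i.val_lt
    have hstep := zmod_val_add_one_eq_or (i - 1)
    rw [sub_add_cancel] at hstep
    simp only [cyclicSpoke, cyclicRim, add_sub_cancel_right]
    obtain heq | ⟨hk, h₀⟩ := hstep
    · rw [show 2 * (i - 1).val + 2 = 2 * i.val by lia]
      exact h.isCircuit (by lia) (by lia)
    · rw [h₀, show 2 * (i - 1).val + 2 = 2 * k by lia]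
      exact h.isCircuit_last_first hE hind hcoind
  isCocircuit i := by
    have hlt := (i + 1).val_lt
    simp only [cyclicSpoke, cyclicRim, add_sub_cancel_right]
    obtain heq | ⟨hk, h₀⟩ := zmod_val_add_one_eq_or i
    · rw [heq]
      exact h.isCocircuit (by lia)
    · rw [h₀, show 2 * i.val + 1 = 2 * k - 1 by lia, show 2 * i.val + 2 = 2 * k by lia]
      exact h.isCocircuit_last_first hE hind hcoind

theorem isWheel_or_isWhirl (h : IsFanFun M false (2 * k) e) (hE : M.E ⊆ fanSet (2 * k) e)
    (hind : M.E.Pairwise fun a b => M.Indep {a, b})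
    (hcoind : M.E.Pairwise fun a b => M.Coindep {a, b}) : IsWheel M ∨ IsWhirl M := by
  have hk : 2 ≤ k := by have := h.three_le; lia
  have : NeZero k := ⟨by lia⟩
  have hcyc := h.isCyclicFan hE hind hcoind
  by_cases hw : M.Indep (range (cyclicRim k e))
  exacts [Or.inr (hcyc.isWhirl hk hw), Or.inl (hcyc.isWheel hk hw)]

end IsFanFun

end PaperDefs

theorem statement6_general {M : Matroid α} {b : Bool} {n : ℕ} {e : ℕ → α} (hM : ThreeConn M)
    (hE : 4 ≤ M.E.encard) (hwheel : ¬ IsWheel M) (hwhirl : ¬ IsWhirl M)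
    (hfan : IsFanFun M b n e) (hrim : posBool b 1 = false) :
    erk M {e 1, e 2} + erk M (M.E \ fanSet n e) = erk M ({e 1, e 2} ∪ (M.E \ fanSet n e)) + 1 := by
  obtain rfl : b = false := hrim
  have hn := hfan.three_le
  have hne : Even n → (M.E \ fanSet n e).Nonempty := by
    intro heven
    obtain ⟨k, rfl⟩ := heven.two_dvd
    refine sdiff_nonempty.2 fun hsub => ?_
    exact (hfan.isWheel_or_isWhirl hsub (hM.pairwise_indep_pair hE)
      (hM.pairwise_coindep_pair hE)).elim hwheel hwhirl
  have hne₁₂ : e 1 ≠ e 2 := hfan.injOn.ne ⟨le_rfl, by lia⟩ ⟨by lia, by lia⟩ (by lia)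
  have hpair : M.eRk {e 1, e 2} = 2 := by
    rw [(hM.pairwise_indep_pair hE (hfan.mem_ground le_rfl (by lia))
      (hfan.mem_ground (by lia) (by lia)) hne₁₂).eRk_eq_encard, encard_pair hne₁₂]
  simp only [erk_eq_eRk]
  rw [hpair, hfan.eRk_pair_union_compl_eq hM hE hne, add_comm, add_assoc, one_add_one_eq_two]

/-- If `F = (e 1, ..., e n)` is a fan of the representable 3-connected matroid `N`
(which is neither a wheel nor a whirl and has at least four elements) and `e 1` is a
rim element, then the local connectivity between `{e 1, e 2}` and `E - F` is one. -/
theorem statement6 (N : Matroid α) (hN3 : ThreeConn N)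
    (𝔽 : Type*) [Field 𝔽] (hrep : RepOver N 𝔽)
    (hNcard : 4 ≤ N.E.encard) (hNwheel : ¬ IsWheel N) (hNwhirl : ¬ IsWhirl N)
    (b : Bool) (n : ℕ) (e : ℕ → α) (hfan : IsFanFun N b n e)
    (hrim : posBool b 1 = false) :
    erk N {e 1, e 2} + erk N (N.E \ fanSet n e)
      = erk N ({e 1, e 2} ∪ (N.E \ fanSet n e)) + 1 :=
  statement6_general hN3 hNcard hNwheel hNwhirl hfan hrim
end
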